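/- arXiv:0812.2573 — 2 statements merged into one kernel-verified Lean document; each statement's English description precedes it below -/
import Mathlib

section
/- Let M be a compact metric space and Φ a continuous flow on M such that lim_{t→±∞} Φ(t,x) exists for every x ∈ M, the fixed-point set M_fix is finite, and the Smale order ≼ on M_fix is antisymmetric (hence a partial order). Then for every lower set L ⊆ M_fix with respect to ≼, the set A_L := ⋃_{x ∈ L} W⁻(x) is an attractor for Φ, its fixed-point set is exactly L, and its dual repellor is M ∖ W⁺(A_L) = ⋃_{x ∈ M_fix ∖ L} W⁺(x). -/
open Filter

variable {M : Type*} [MetricSpace M] [CompactSpace M]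

/-- The set of fixed points of a flow. -/
def fixedPoints (Φ : Flow ℝ M) : Set M := {x : M | ∀ t : ℝ, Φ t x = x}

/-- The stable set `W⁺(A) = {x | dist(Φ(t,x), A) → 0 as t → +∞}` of a set `A`
(stated with the extended distance, so that `W⁺(∅) = ∅` as in the paper). -/
def wPlus (Φ : Flow ℝ M) (A : Set M) : Set M :=
  {x : M | Tendsto (fun t : ℝ => EMetric.infEdist (Φ t x) A) atTop (nhds 0)}

/-- The unstable set `W⁻(A) = {x | dist(Φ(t,x), A) → 0 as t → −∞}` of a set `A`
(stated with the extended distance, so that `W⁻(∅) = ∅` as in the paper). -/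
def wMinus (Φ : Flow ℝ M) (A : Set M) : Set M :=
  {x : M | Tendsto (fun t : ℝ => EMetric.infEdist (Φ t x) A) atBot (nhds 0)}

/-- Every flow line has a sink and a source: `lim_{t→±∞} Φ(t,x)` exists for all `x`. -/
def allOrbitsConverge (Φ : Flow ℝ M) : Prop :=
  ∀ x : M, (∃ y : M, Tendsto (fun t : ℝ => Φ t x) atTop (nhds y)) ∧
    (∃ y : M, Tendsto (fun t : ℝ => Φ t x) atBot (nhds y))

/-- An attractor: a compact invariant set admitting a neighborhood `U` with
`Φ(t, cl U) ⊆ int U` for all `t > 0` and `A = ⋂_{t ≥ 0} Φ(t, U)`. -/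
def IsAttractor (Φ : ℝ → M → M) (A : Set M) : Prop :=
  IsCompact A ∧ (∀ t : ℝ, Φ t '' A = A) ∧
    ∃ U : Set M, A ⊆ interior U ∧ (∀ t > (0 : ℝ), Φ t '' closure U ⊆ interior U) ∧
      A = ⋂ t ∈ Set.Ici (0 : ℝ), Φ t '' U

/-- The one-step Smale relation on fixed points: `x ≺ y` iff `W⁻(y) ∩ W⁺(x) ≠ ∅`. -/
def smaleRel (Φ : Flow ℝ M) (x y : M) : Prop :=
  x ∈ fixedPoints Φ ∧ y ∈ fixedPoints Φ ∧ (wMinus Φ {y} ∩ wPlus Φ {x}).Nonempty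

/-- The Smale order: the reflexive-transitive closure of the one-step Smale relation. -/
def smaleLe (Φ : Flow ℝ M) : M → M → Prop :=
  Relation.ReflTransGen (smaleRel Φ)

/-- A lower set of fixed points with respect to the Smale order. -/
def IsSmaleLowerSet (Φ : Flow ℝ M) (L : Set M) : Prop :=
  L ⊆ fixedPoints Φ ∧ ∀ y ∈ L, ∀ x ∈ fixedPoints Φ, smaleLe Φ x y → x ∈ L


open Topology

/-- Limit data of a flow all of whose orbits converge, with a lower set `L`. -/
structure LimData (Φ : Flow ℝ M) (L : Set M) (α ω : M → M) : Prop where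
  ha : ∀ x, Tendsto (fun t : ℝ => Φ t x) atBot (𝓝 (α x))
  hw : ∀ x, Tendsto (fun t : ℝ => Φ t x) atTop (𝓝 (ω x))
  fin : (fixedPoints Φ).Finite
  sub : L ⊆ fixedPoints Φ
  low : ∀ x, α x ∈ L → ω x ∈ L

/-- Closed invariant sets. -/
def ClInv (Φ : Flow ℝ M) (K : Set M) : Prop :=
  IsClosed K ∧ ∀ t : ℝ, ∀ x ∈ K, Φ t x ∈ K

/-- `K` admits an attracting block for `L`. -/
def GoodSet (Φ : Flow ℝ M) (L K : Set M) : Prop :=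
  ∃ U : Set M, IsOpen U ∧ ∃ T : ℝ, 0 < T ∧ ∀ x ∈ K,
    (x ∈ closure U → Φ T x ∈ U) ∧ (x ∈ L → x ∈ U) ∧
    (x ∈ closure U → x ∈ fixedPoints Φ → x ∈ L)

theorem flow_cont (Φ : Flow ℝ M) (t : ℝ) : Continuous (fun x => Φ t x) :=
  Φ.continuous continuous_const continuous_id

theorem flow_cont_t (Φ : Flow ℝ M) (x : M) : Continuous (fun t : ℝ => Φ t x) :=
  Φ.continuous continuous_id continuous_const

theorem flow_cont2 (Φ : Flow ℝ M) : Continuous (fun p : ℝ × M => Φ p.1 p.2) :=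
  Φ.continuous continuous_fst continuous_snd

theorem fixed_of_lim (Φ : Flow ℝ M) {l : Filter ℝ} [l.NeBot] {x y : M}
    (hl : ∀ s : ℝ, Tendsto (fun t => s + t) l l)
    (h : Tendsto (fun t : ℝ => Φ t x) l (𝓝 y)) : y ∈ fixedPoints Φ := by
  intro s
  have h1 : Tendsto (fun t : ℝ => Φ s (Φ t x)) l (𝓝 (Φ s y)) :=
    ((flow_cont Φ s).tendsto y).comp h
  have h2 : Tendsto (fun t : ℝ => Φ (s + t) x) l (𝓝 y) := h.comp (hl s)
  simp only [Φ.map_add] at h2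
  exact tendsto_nhds_unique h1 h2

namespace LimData

variable {Φ : Flow ℝ M} {L : Set M} {α ω : M → M}

theorem a_fix (D : LimData Φ L α ω) (x : M) : α x ∈ fixedPoints Φ :=
  fixed_of_lim Φ (fun s => tendsto_atBot_add_const_left _ s tendsto_id) (D.ha x)

theorem w_fix (D : LimData Φ L α ω) (x : M) : ω x ∈ fixedPoints Φ :=
  fixed_of_lim Φ (fun s => tendsto_atTop_add_const_left _ s tendsto_id) (D.hw x)

theorem a_of_fix (D : LimData Φ L α ω) {x : M} (h : x ∈ fixedPoints Φ) : α x = x := by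
  have h1 := D.ha x
  simp only [h _] at h1
  exact (tendsto_nhds_unique h1 tendsto_const_nhds)

theorem w_of_fix (D : LimData Φ L α ω) {x : M} (h : x ∈ fixedPoints Φ) : ω x = x := by
  have h1 := D.hw x
  simp only [h _] at h1
  exact (tendsto_nhds_unique h1 tendsto_const_nhds)

theorem a_flow (D : LimData Φ L α ω) (s : ℝ) (x : M) : α (Φ s x) = α x := by
  have h1 := D.ha (Φ s x)
  have h2 : Tendsto (fun t : ℝ => Φ (t + s) x) atBot (𝓝 (α x)) :=
    (D.ha x).comp (tendsto_atBot_add_const_right _ s tendsto_id)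
  simp only [Φ.map_add] at h2
  exact tendsto_nhds_unique h1 h2

theorem w_flow (D : LimData Φ L α ω) (s : ℝ) (x : M) : ω (Φ s x) = ω x := by
  have h1 := D.hw (Φ s x)
  have h2 : Tendsto (fun t : ℝ => Φ (t + s) x) atTop (𝓝 (ω x)) :=
    (D.hw x).comp (tendsto_atTop_add_const_right _ s tendsto_id)
  simp only [Φ.map_add] at h2
  exact tendsto_nhds_unique h1 h2

theorem a_mem (D : LimData Φ L α ω) {K : Set M} (hK : ClInv Φ K) {x : M} (hx : x ∈ K) :
    α x ∈ K :=
  hK.1.mem_of_tendsto (D.ha x) (Eventually.of_forall fun t => hK.2 t x hx)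

theorem w_mem (D : LimData Φ L α ω) {K : Set M} (hK : ClInv Φ K) {x : M} (hx : x ∈ K) :
    ω x ∈ K :=
  hK.1.mem_of_tendsto (D.hw x) (Eventually.of_forall fun t => hK.2 t x hx)

/-- A block gives closedness. -/
theorem closed_of_good (D : LimData Φ L α ω) {K : Set M} (hK : ClInv Φ K)
    (hg : GoodSet Φ L K) :
    IsClosed ({x | α x ∈ L} ∩ K) ∧ IsClosed ({x | ω x ∉ L} ∩ K) := by
  obtain ⟨U, hU, T, hT, H⟩ := hg
  have step : ∀ j : ℕ, ∀ y ∈ K, y ∈ U → Φ (j * T) y ∈ U := by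
    intro j
    induction j with
    | zero => intro y _ hy; simpa [Φ.map_zero_apply] using hy
    | succ j ih =>
      intro y hy hyU
      have e : ((j + 1 : ℕ) : ℝ) * T = T + j * T := by push_cast; ring
      rw [e, Φ.map_add]
      exact (H _ (hK.2 _ _ hy)).1 (subset_closure (ih y hy hyU))
  have tT : Tendsto (fun k : ℕ => (k : ℝ) * T) atTop atTop :=
    tendsto_natCast_atTop_atTop.atTop_mul_const hT
  have tB : Tendsto (fun k : ℕ => -((k : ℝ) * T)) atTop atBot :=
    tendsto_neg_atTop_atBot.comp tT
  constructor
  · have e : {x | α x ∈ L} ∩ K = K ∩ ⋂ k : ℕ, (fun x => Φ (-((k : ℝ) * T)) x) ⁻¹' closure U := by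
      ext x
      simp only [Set.mem_inter_iff, Set.mem_setOf_eq, Set.mem_iInter, Set.mem_preimage]
      constructor
      · rintro ⟨hx, hxK⟩
        refine ⟨hxK, fun k => subset_closure ?_⟩
        have hU' : U ∈ 𝓝 (α x) := hU.mem_nhds ((H _ (D.a_mem hK hxK)).2.1 hx)
        have ev := ((D.ha x).comp tB).eventually hU'
        obtain ⟨m, hm⟩ := eventually_atTop.1 ev
        have h1 := step m _ (hK.2 (-(((k + m : ℕ) : ℝ) * T)) x hxK) (hm (k + m) (by omega))
        rw [← Φ.map_add] at h1
        convert h1 using 2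
        push_cast; ring
      · rintro ⟨hxK, h⟩
        refine ⟨?_, hxK⟩
        have : α x ∈ closure U :=
          isClosed_closure.mem_of_tendsto ((D.ha x).comp tB) (Eventually.of_forall h)
        exact (H _ (D.a_mem hK hxK)).2.2 this (D.a_fix x)
    rw [e]
    exact hK.1.inter (isClosed_iInter fun k => isClosed_closure.preimage (flow_cont Φ _))
  · have e : {x | ω x ∉ L} ∩ K = K ∩ ⋂ k : ℕ, (fun x => Φ ((k : ℝ) * T) x) ⁻¹' Uᶜ := by
      ext x
      simp only [Set.mem_inter_iff, Set.mem_setOf_eq, Set.mem_iInter, Set.mem_preimage,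
        Set.mem_compl_iff]
      constructor
      · rintro ⟨hx, hxK⟩
        refine ⟨hxK, fun k hk => hx ?_⟩
        have : ω x ∈ closure U := by
          refine isClosed_closure.mem_of_tendsto ((D.hw x).comp tT) ?_
          filter_upwards [eventually_ge_atTop k] with m hm
          have h1 := step (m - k) _ (hK.2 _ _ hxK) hk
          rw [← Φ.map_add, ← add_mul, ← Nat.cast_add, Nat.sub_add_cancel hm] at h1
          exact subset_closure h1
        exact (H _ (D.w_mem hK hxK)).2.2 this (D.w_fix x)
      · rintro ⟨hxK, h⟩
        refine ⟨fun hx => ?_, hxK⟩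
        have hU' : U ∈ 𝓝 (ω x) := hU.mem_nhds ((H _ (D.w_mem hK hxK)).2.1 hx)
        obtain ⟨m, hm⟩ := (((D.hw x).comp tT).eventually hU').exists
        exact h m hm
    rw [e]
    exact hK.1.inter (isClosed_iInter fun k => hU.isClosed_compl.preimage (flow_cont Φ _))

/-- openness of the tube condition -/
theorem tube_open (Φ : Flow ℝ M) {g : ℝ → M → ℝ} (hg : Continuous (fun p : ℝ × M => g p.1 p.2))
    (T ε : ℝ) : IsOpen {x | ∀ t ∈ Set.Icc (0:ℝ) T, g t (Φ t x) < ε} := by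
  rw [isOpen_iff_mem_nhds]
  intro x hx
  have hc : Continuous (fun p : M × ℝ => g p.2 (Φ p.2 p.1)) :=
    hg.comp (continuous_snd.prodMk (Φ.continuous continuous_snd continuous_fst))
  have := (isCompact_Icc (a := (0:ℝ)) (b := T)).eventually_forall_of_forall_eventually
    (x₀ := x) (P := fun y t => g t (Φ t y) < ε) (fun t ht =>
      (hc.tendsto (x, t)).eventually (gt_mem_nhds (hx t ht)))
  exact this

theorem stable (D : LimData Φ L α ω) {K : Set M} (hK : ClInv Φ K)
    {g : M → ℝ} (hg : Continuous g) (g0 : ∀ x ∈ K, α x ∈ L → g x = 0)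
    (g1 : ∀ x ∈ K, ω x ∉ L → g x = 1) {ε : ℝ} (e0 : 0 < ε) (e1 : ε < 1) :
    ∃ N : Set M, IsOpen N ∧ (∀ x ∈ K, α x ∈ L → x ∈ N) ∧
      ∀ x ∈ K, x ∈ N → ∀ t : ℝ, 0 ≤ t → g (Φ t x) < ε := by
  have hE : IsCompact (K ∩ {x | ε ≤ g x}) :=
    (hK.1.inter (isClosed_le continuous_const hg)).isCompact
  obtain ⟨n, hn⟩ := hE.elim_directed_cover
    (fun n : ℕ => ⋃ s ∈ Set.Icc (-(n:ℝ)) 0, (fun x => Φ s x) ⁻¹' {x | ε < g x})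
    (fun n => isOpen_biUnion fun s _ =>
      (isOpen_lt continuous_const hg).preimage (flow_cont Φ s))
    (by
      rintro x ⟨hxK, hx⟩
      have hxA : α x ∉ L := fun h => by
        have := g0 x hxK h
        simp only [Set.mem_setOf_eq] at hx
        linarith
      have hga : g (α x) = 1 := g1 _ (D.a_mem hK hxK) (by rwa [D.w_of_fix (D.a_fix x)])
      have ev : ∀ᶠ t in atBot, ε < g (Φ t x) :=
        ((hg.tendsto _).comp (D.ha x)).eventually (lt_mem_nhds (by rw [hga]; exact e1))
      obtain ⟨s, hs, hs0⟩ := (ev.and (eventually_le_atBot 0)).exists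
      obtain ⟨n, hn⟩ := exists_nat_ge (-s)
      simp only [Set.mem_iUnion]
      exact ⟨n, s, ⟨by linarith, hs0⟩, hs⟩)
    (by
      apply Monotone.directed_le
      intro m n hmn
      apply Set.biUnion_mono
      · apply Set.Icc_subset_Icc_left
        have : (m:ℝ) ≤ n := by exact_mod_cast hmn
        linarith
      · intro _ _; exact le_rfl)
  refine ⟨{x | ∀ t ∈ Set.Icc (0:ℝ) n, g (Φ t x) < ε},
    tube_open Φ (g := fun _ => g) (hg.comp continuous_snd) n ε, ?_, ?_⟩
  · intro x hxK hx t _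
    rw [g0 _ (hK.2 t x hxK) (by rwa [D.a_flow])]
    exact e0
  · intro x hxK hx t ht
    by_contra hcon
    push Not at hcon
    have hcomp : IsCompact (Set.Icc 0 t ∩ {s | ε ≤ g (Φ s x)}) :=
      isCompact_Icc.inter_right (isClosed_le continuous_const (hg.comp (flow_cont_t Φ x)))
    obtain ⟨t0, ⟨⟨ht0, ht0'⟩, hm⟩, hleast⟩ := hcomp.exists_isLeast ⟨t, ⟨ht, le_rfl⟩, hcon⟩
    have hn0 : (n:ℝ) < t0 := by
      by_contra h
      push Not at h
      have := hx t0 ⟨ht0, h⟩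
      simp only [Set.mem_setOf_eq] at hm
      linarith
    have := hn ⟨hK.2 t0 x hxK, hm⟩
    simp only [Set.mem_iUnion, Set.mem_preimage, Set.mem_setOf_eq] at this
    obtain ⟨s, ⟨hs1, hs2⟩, hs⟩ := this
    rw [← Φ.map_add] at hs
    have h1 : t0 ≤ s + t0 :=
      hleast ⟨⟨by linarith, by linarith⟩, hs.le⟩
    have h2 : s = 0 := by linarith
    subst h2
    have h3 : (0:ℝ) + t0 = t0 := zero_add _
    rw [h3] at hs
    -- use strictness by looking slightly to the left
    have ev : ∀ᶠ r in 𝓝 t0, ε < g (Φ r x) :=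
      ((hg.comp (flow_cont_t Φ x)).tendsto t0).eventually (lt_mem_nhds hs)
    have hn00 : (0:ℝ) ≤ n := Nat.cast_nonneg n
    have ev1 : ∀ᶠ r in 𝓝[<] t0, ε < g (Φ r x) := ev.filter_mono nhdsWithin_le_nhds
    have ev2 : ∀ᶠ r in 𝓝[<] t0, 0 < r :=
      nhdsWithin_le_nhds (lt_mem_nhds (lt_of_le_of_lt hn00 hn0))
    obtain ⟨r, ⟨hr1, hr2⟩, hr3⟩ :=
      ((ev1.and ev2).and self_mem_nhdsWithin).exists
    have hr3' : r < t0 := hr3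
    have := hleast ⟨⟨hr2.le, by linarith⟩, hr1.le⟩
    linarith

theorem exists_sep (D : LimData Φ L α ω) {K : Set M}
    (cA : IsClosed ({x | α x ∈ L} ∩ K)) (cR : IsClosed ({x | ω x ∉ L} ∩ K)) :
    ∃ g : M → ℝ, Continuous g ∧ (∀ x ∈ K, α x ∈ L → g x = 0) ∧
      (∀ x ∈ K, ω x ∉ L → g x = 1) ∧ ∀ x, 0 ≤ g x := by
  obtain ⟨f, h0, h1, h2⟩ := exists_continuous_zero_one_of_isClosed cA cR
    (Set.disjoint_left.2 fun x hx hx' => hx'.1 (D.low x hx.1))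
  exact ⟨f, f.continuous, fun x hx h => h0 ⟨h, hx⟩, fun x hx h => h1 ⟨h, hx⟩, fun x => (h2 x).1⟩

theorem good_of_closed (D : LimData Φ L α ω) {K : Set M} (hK : ClInv Φ K)
    (cA : IsClosed ({x | α x ∈ L} ∩ K)) (cR : IsClosed ({x | ω x ∉ L} ∩ K)) :
    GoodSet Φ L K := by
  obtain ⟨g, hg, g0, g1, _⟩ := D.exists_sep cA cR
  obtain ⟨N, hN, hAN, hst⟩ := D.stable hK hg g0 g1 (ε := 1/2) (by norm_num) (by norm_num)
  have hcl : closure {x | g x < 1/2} ⊆ {x | g x ≤ 1/2} :=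
    closure_minimal (fun x (hx : g x < 1/2) => hx.le) (isClosed_le hg continuous_const)
  have hE : IsCompact (K ∩ {x | g x ≤ 1/2}) :=
    (hK.1.inter (isClosed_le hg continuous_const)).isCompact
  obtain ⟨n, hn⟩ := hE.elim_directed_cover
    (fun n : ℕ => ⋃ s ∈ Set.Icc (0:ℝ) n, (fun x => Φ s x) ⁻¹' N)
    (fun n => isOpen_biUnion fun s _ => hN.preimage (flow_cont Φ s))
    (by
      rintro x ⟨hxK, hx⟩
      have hxR : ω x ∈ L := by
        by_contra h
        have := g1 x hxK h
        simp only [Set.mem_setOf_eq] at hx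
        linarith
      have hN' : N ∈ 𝓝 (ω x) :=
        hN.mem_nhds (hAN _ (D.w_mem hK hxK) (by rwa [D.a_of_fix (D.w_fix x)]))
      obtain ⟨s, hs, hs0⟩ := (((D.hw x).eventually hN').and (eventually_ge_atTop 0)).exists
      obtain ⟨n, hn⟩ := exists_nat_ge s
      simp only [Set.mem_iUnion]
      exact ⟨n, s, ⟨hs0, hn⟩, hs⟩)
    (by
      apply Monotone.directed_le
      intro m n hmn
      apply Set.biUnion_mono
      · apply Set.Icc_subset_Icc_right
        exact_mod_cast hmn
      · intro _ _; exact le_rfl)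
  refine ⟨{x | g x < 1/2}, isOpen_lt hg continuous_const, n + 1, by positivity, ?_⟩
  intro x hxK
  refine ⟨fun hx => ?_, fun hx => ?_, fun hx hf => ?_⟩
  · have := hn ⟨hxK, hcl hx⟩
    simp only [Set.mem_iUnion, Set.mem_preimage] at this
    obtain ⟨s, ⟨hs1, hs2⟩, hs⟩ := this
    have h := hst _ (hK.2 s x hxK) hs (n + 1 - s) (by linarith)
    rw [← Φ.map_add, sub_add_cancel] at h
    exact h
  · have : g x = 0 := g0 x hxK (by rwa [D.a_of_fix (D.sub hx)])
    simp only [Set.mem_setOf_eq, this]; norm_num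
  · by_contra h
    have h1 := g1 x hxK (by rwa [D.w_of_fix hf])
    have h2 := hcl hx
    simp only [Set.mem_setOf_eq] at h2
    linarith

theorem good_of_chain (D : LimData Φ L α ω) {c : Set (Set M)} (hc : ∀ K ∈ c, ClInv Φ K)
    (hch : IsChain (· ⊆ ·) c) (hne : c.Nonempty) (hg : GoodSet Φ L (⋂₀ c)) :
    ∃ K ∈ c, GoodSet Φ L K := by
  obtain ⟨U, hU, T, hT, H⟩ := hg
  have hL : IsClosed L := (D.fin.subset D.sub).isClosed
  have hFL : IsClosed (fixedPoints Φ \ L) := (D.fin.subset Set.diff_subset).isClosed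
  let Z : Set M := (closure U ∩ (fun x => Φ T x) ⁻¹' Uᶜ) ∪ (L ∩ Uᶜ) ∪
    (closure U ∩ (fixedPoints Φ \ L))
  have hZ : IsClosed Z :=
    ((isClosed_closure.inter (hU.isClosed_compl.preimage (flow_cont Φ T))).union
      (hL.inter hU.isClosed_compl)).union (isClosed_closure.inter hFL)
  have : Nonempty c := hne.to_subtype
  obtain ⟨⟨K, hKc⟩, hK⟩ := hZ.isCompact.elim_directed_family_closed
    (fun K : c => (K : Set M)) (fun K => (hc K K.2).1)
    (by
      rw [← Set.sInter_eq_iInter]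
      ext x
      simp only [Set.mem_inter_iff, Set.mem_empty_iff_false, iff_false, not_and]
      intro hxZ hx
      obtain ⟨h1, h2, h3⟩ := H x hx
      rcases hxZ with (⟨a, b⟩ | ⟨a, b⟩) | ⟨a, b, b'⟩
      · exact b (h1 a)
      · exact b (h2 a)
      · exact b' (h3 a b))
    (by
      intro A B
      rcases hch.total A.2 B.2 with h | h
      · exact ⟨A, le_rfl, h⟩
      · exact ⟨B, h, le_rfl⟩)
  refine ⟨K, hKc, U, hU, T, hT, fun x hx => ?_⟩
  have hxZ : x ∉ Z := fun h => by
    have : x ∈ Z ∩ K := ⟨h, hx⟩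
    rw [hK] at this
    exact this
  simp only [Z, Set.mem_union, Set.mem_inter_iff, Set.mem_preimage, Set.mem_compl_iff,
    Set.mem_diff] at hxZ
  tauto

theorem all_good (D : LimData Φ L α ω) {K₀ : Set M} (hK₀ : ClInv Φ K₀) : GoodSet Φ L K₀ := by
  by_contra hbad
  obtain ⟨K, -, hmin⟩ := zorn_superset_nonempty {K | ClInv Φ K ∧ ¬ GoodSet Φ L K}
    (by
      intro c hc hch hne
      refine ⟨⋂₀ c, ⟨⟨isClosed_sInter fun K hK => (hc hK).1.1, ?_⟩, ?_⟩, 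
        fun s hs => Set.sInter_subset_of_mem hs⟩
      · intro t x hx K hK
        exact (hc hK).1.2 t x (hx K hK)
      · intro hg
        obtain ⟨K, hK, hg'⟩ := D.good_of_chain (fun K hK => (hc hK).1) hch hne hg
        exact (hc hK).2 hg') K₀ ⟨hK₀, hbad⟩
  obtain ⟨⟨hK, hKbad⟩, hmin'⟩ := hmin
  have hKne : K.Nonempty := by
    rw [Set.nonempty_iff_ne_empty]
    rintro rfl
    exact hKbad ⟨∅, isOpen_empty, 1, one_pos, fun x hx => hx.elim⟩
  -- isolating closed neighbourhoods
  have hiso : ∀ p : M, ∃ C : Set M, IsClosed C ∧ C ∈ 𝓝 p ∧ ∀ q ∈ C, q ∈ fixedPoints Φ → q = p := by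
    intro p
    have h1 : IsClosed (fixedPoints Φ \ {p}) := (D.fin.subset Set.diff_subset).isClosed
    have h2 : (fixedPoints Φ \ {p})ᶜ ∈ 𝓝 p := h1.isOpen_compl.mem_nhds (by simp)
    obtain ⟨C, hC, hCc, hCs⟩ := exists_mem_nhds_isClosed_subset h2
    refine ⟨C, hCc, hC, fun q hq hf => ?_⟩
    by_contra hne
    exact hCs hq ⟨hf, hne⟩
  choose C hCc hCn hCf using hiso
  have hFinT : Finite (fixedPoints Φ) := D.fin
  let F : (fixedPoints Φ × fixedPoints Φ) × ℕ → Set M := fun i =>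
    ⋂ t ∈ Set.Ici (i.2 : ℝ), ((fun x => Φ (-t) x) ⁻¹' C i.1.1) ∩ ((fun x => Φ t x) ⁻¹' C i.1.2)
  have hFc : ∀ i, IsClosed (F i) := fun i =>
    isClosed_biInter fun t _ => ((hCc _).preimage (flow_cont Φ _)).inter
      ((hCc _).preimage (flow_cont Φ _))
  have : Nonempty K := hKne.to_subtype
  have : CompactSpace K := isCompact_iff_compactSpace.1 hK.1.isCompact
  obtain ⟨⟨⟨a, b⟩, n⟩, hint⟩ := nonempty_interior_of_iUnion_of_closed
    (f := fun i => (Subtype.val : K → M) ⁻¹' F i)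
    (fun i => (hFc i).preimage continuous_subtype_val)
    (by
      rw [Set.eq_univ_iff_forall]
      rintro ⟨x, hx⟩
      have e1 := (D.ha x).eventually (hCn (α x))
      have e2 := (D.hw x).eventually (hCn (ω x))
      obtain ⟨s1, h1⟩ := eventually_atBot.1 e1
      obtain ⟨s2, h2⟩ := eventually_atTop.1 e2
      obtain ⟨n, hn⟩ := exists_nat_ge (max (-s1) s2)
      simp only [Set.mem_iUnion, Set.mem_preimage]
      refine ⟨⟨⟨⟨α x, D.a_fix x⟩, ⟨ω x, D.w_fix x⟩⟩, n⟩, ?_⟩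
      simp only [F, Set.mem_iInter]
      intro t ht
      have ht' : (n:ℝ) ≤ t := ht
      have := le_max_left (-s1) s2
      have := le_max_right (-s1) s2
      exact ⟨h1 _ (by linarith), h2 _ (by linarith)⟩)
  have hF : ∀ x ∈ F ((a, b), n), ∀ t : ℝ, (n:ℝ) ≤ t → Φ (-t) x ∈ C a ∧ Φ t x ∈ C b := by
    intro x hx t ht
    simp only [F, Set.mem_iInter] at hx
    exact hx t ht
  have hFa : ∀ x ∈ F ((a, b), n), α x = a := by
    intro x hx
    apply hCf _ _ _ (D.a_fix x)
    refine (hCc a).mem_of_tendsto (D.ha x) ?_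
    filter_upwards [eventually_le_atBot (-(n:ℝ))] with t ht
    have := (hF x hx (-t) (by linarith)).1
    rwa [neg_neg] at this
  have hFb : ∀ x ∈ F ((a, b), n), ω x = b := by
    intro x hx
    apply hCf _ _ _ (D.w_fix x)
    refine (hCc b).mem_of_tendsto (D.hw x) ?_
    filter_upwards [eventually_ge_atTop (n:ℝ)] with t ht
    exact (hF x hx t ht).2
  obtain ⟨⟨x₀, hx₀K⟩, hx₀⟩ := hint
  obtain ⟨V', hV'sub, hV'o, hx₀V'⟩ := mem_interior.1 hx₀
  obtain ⟨V, hVo, rfl⟩ := isOpen_induced_iff.1 hV'o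
  have hVF : ∀ x ∈ K, x ∈ V → x ∈ F ((a, b), n) := fun x hx hxV =>
    @hV'sub ⟨x, hx⟩ hxV
  -- the saturation of `V`
  let W : Set M := ⋃ t : ℝ, (fun x => Φ t x) ⁻¹' V
  have hWo : IsOpen W := isOpen_iUnion fun t => hVo.preimage (flow_cont Φ t)
  have hWinv : ∀ t : ℝ, ∀ x, Φ t x ∈ W → x ∈ W := by
    intro t x hx
    simp only [W, Set.mem_iUnion, Set.mem_preimage] at hx ⊢
    obtain ⟨s, hs⟩ := hx
    exact ⟨s + t, by rwa [Φ.map_add]⟩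
  have hWinv' : ∀ t : ℝ, ∀ x, x ∈ W → Φ t x ∈ W := by
    intro t x hx
    apply hWinv (-t)
    rwa [← Φ.map_add, neg_add_cancel, Φ.map_zero_apply]
  have hOF : ∀ x ∈ K ∩ W, ∃ t : ℝ, Φ t x ∈ F ((a, b), n) := by
    rintro x ⟨hx, hxW⟩
    simp only [W, Set.mem_iUnion, Set.mem_preimage] at hxW
    obtain ⟨s, hs⟩ := hxW
    exact ⟨s, hVF _ (hK.2 _ _ hx) hs⟩
  have hOa : ∀ x ∈ K ∩ W, α x = a := by
    intro x hx
    obtain ⟨t, ht⟩ := hOF x hx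
    rw [← D.a_flow t x]; exact hFa _ ht
  have hOb : ∀ x ∈ K ∩ W, ω x = b := by
    intro x hx
    obtain ⟨t, ht⟩ := hOF x hx
    rw [← D.w_flow t x]; exact hFb _ ht
  have hK' : ClInv Φ (K \ W) := by
    refine ⟨hK.1.inter hWo.isClosed_compl, fun t x hx => ⟨hK.2 t x hx.1, fun h => hx.2 (hWinv t x h)⟩⟩
  have hx₀W : x₀ ∈ W := by
    simp only [W, Set.mem_iUnion, Set.mem_preimage]
    exact ⟨0, by simpa [Φ.map_zero_apply] using hx₀V'⟩
  have hgood' : GoodSet Φ L (K \ W) := by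
    by_contra h
    exact (hmin' (y := K \ W) ⟨hK', h⟩ Set.diff_subset hx₀K).2 hx₀W
  obtain ⟨cA, cR⟩ := D.closed_of_good hK' hgood'
  have hclK : closure (K ∩ W) ⊆ K := closure_minimal Set.inter_subset_left hK.1
  have hclinv : ClInv Φ (closure (K ∩ W)) := by
    refine ⟨isClosed_closure, fun t x hx => ?_⟩
    exact map_mem_closure (flow_cont Φ t) hx
      (fun y hy => ⟨hK.2 t y hy.1, hWinv' t y hy.2⟩)
  have hclfix : ∀ p ∈ closure (K ∩ W), p ∈ fixedPoints Φ → p = a ∨ p = b := by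
    intro p hp hpf
    let S : Set M := (fun q : ℝ × M => Φ q.1 q.2) '' (Set.Icc (-(n:ℝ)) n ×ˢ F ((a, b), n))
    have hS : IsClosed S :=
      ((isCompact_Icc.prod (hFc _).isCompact).image (flow_cont2 Φ)).isClosed
    have hsub : K ∩ W ⊆ (C a ∪ C b) ∪ S := by
      intro x hx
      obtain ⟨t, ht⟩ := hOF x hx
      have hxe : Φ (-t) (Φ t x) = x := by
        rw [← Φ.map_add, neg_add_cancel, Φ.map_zero_apply]
      by_cases h1 : (n:ℝ) ≤ t
      · left; left
        have := (hF _ ht t h1).1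
        rwa [hxe] at this
      by_cases h2 : (n:ℝ) ≤ -t
      · left; right
        have := (hF _ ht (-t) h2).2
        rwa [hxe] at this
      right
      exact ⟨(-t, Φ t x), ⟨⟨by linarith, by linarith⟩, ht⟩, hxe⟩
    have := closure_minimal hsub (((hCc a).union (hCc b)).union hS) hp
    rcases this with (h | h) | ⟨⟨t, y⟩, ⟨_, hy⟩, hyp⟩
    · exact Or.inl (hCf _ _ h hpf)
    · exact Or.inr (hCf _ _ h hpf)
    · left
      have : α y = p := by
        rw [← D.a_flow t y]
        simp only at hyp
        rw [hyp, D.a_of_fix hpf]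
      rw [← this]; exact hFa _ hy
  have hx₀O : x₀ ∈ K ∩ W := ⟨hx₀K, hx₀W⟩
  have hab : (a : M) ∈ L → (b : M) ∈ L := by
    intro h
    have := D.low x₀ (by rwa [hOa _ hx₀O])
    rwa [hOb _ hx₀O] at this
  apply hKbad
  apply D.good_of_closed hK
  · by_cases haL : (a : M) ∈ L
    · have e : {x | α x ∈ L} ∩ K = ({x | α x ∈ L} ∩ (K \ W)) ∪ closure (K ∩ W) := by
        ext x
        constructor
        · rintro ⟨h1, h2⟩
          by_cases hW : x ∈ W
          · exact Or.inr (subset_closure ⟨h2, hW⟩)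
          · exact Or.inl ⟨h1, h2, hW⟩
        · rintro (⟨h1, h2, _⟩ | h)
          · exact ⟨h1, h2⟩
          · refine ⟨?_, hclK h⟩
            show α x ∈ L
            rcases hclfix _ (D.a_mem hclinv h) (D.a_fix x) with h' | h'
            · exact h' ▸ haL
            · exact h' ▸ hab haL
      rw [e]
      exact cA.union isClosed_closure
    · have e : {x | α x ∈ L} ∩ K = {x | α x ∈ L} ∩ (K \ W) := by
        ext x
        constructor
        · rintro ⟨h1, h2⟩
          refine ⟨h1, h2, fun hW => haL ?_⟩
          rw [← hOa x ⟨h2, hW⟩]; exact h1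
        · rintro ⟨h1, h2, _⟩
          exact ⟨h1, h2⟩
      rw [e]; exact cA
  · by_cases hbL : (b : M) ∈ L
    · have e : {x | ω x ∉ L} ∩ K = {x | ω x ∉ L} ∩ (K \ W) := by
        ext x
        constructor
        · rintro ⟨h1, h2⟩
          refine ⟨h1, h2, fun hW => h1 ?_⟩
          rw [hOb x ⟨h2, hW⟩]; exact hbL
        · rintro ⟨h1, h2, _⟩
          exact ⟨h1, h2⟩
      rw [e]; exact cR
    · have e : {x | ω x ∉ L} ∩ K = ({x | ω x ∉ L} ∩ (K \ W)) ∪ closure (K ∩ W) := by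
        ext x
        constructor
        · rintro ⟨h1, h2⟩
          by_cases hW : x ∈ W
          · exact Or.inr (subset_closure ⟨h2, hW⟩)
          · exact Or.inl ⟨h1, h2, hW⟩
        · rintro (⟨h1, h2, _⟩ | h)
          · exact ⟨h1, h2⟩
          · refine ⟨?_, hclK h⟩
            rcases hclfix _ (D.w_mem hclinv h) (D.w_fix x) with h' | h'
            · exact fun h2 => hbL (hab (h' ▸ h2))
            · exact fun h2 => hbL (h' ▸ h2)
      rw [e]
      exact cR.union isClosed_closure

theorem attractor (D : LimData Φ L α ω) (cA : IsClosed {x | α x ∈ L})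
    (cR : IsClosed {x | ω x ∉ L}) : IsAttractor (fun t x => Φ t x) {x | α x ∈ L} := by
  have hK : ClInv Φ (Set.univ : Set M) := ⟨isClosed_univ, fun _ _ _ => trivial⟩
  have hinv : ∀ t : ℝ, (fun x => Φ t x) '' {x | α x ∈ L} = {x | α x ∈ L} := by
    intro t
    ext x
    constructor
    · rintro ⟨y, hy, rfl⟩
      simpa only [Set.mem_setOf_eq, D.a_flow] using hy
    · intro hx
      refine ⟨Φ (-t) x, by simpa only [Set.mem_setOf_eq, D.a_flow] using hx, ?_⟩
      simp only
      rw [← Φ.map_add, add_neg_cancel, Φ.map_zero_apply]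
  refine ⟨cA.isCompact, hinv, ?_⟩
  obtain ⟨g, hg, g0, g1, gn⟩ := D.exists_sep (K := Set.univ) (by simpa using cA) (by simpa using cR)
  obtain ⟨N, hN, hAN, hst⟩ := D.stable hK hg g0 g1 (ε := 1/4) (by norm_num) (by norm_num)
  let c : ℝ → ℝ := fun t => 2 - Real.exp (-t)
  have hc : Continuous c := by fun_prop
  have hc1 : ∀ t, 0 ≤ t → 1 ≤ c t := fun t ht => by
    have : Real.exp (-t) ≤ 1 := Real.exp_le_one_iff.2 (by linarith)
    simp only [c]; linarith
  have hc2 : ∀ t, c t < 2 := fun t => by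
    have := Real.exp_pos (-t)
    simp only [c]; linarith
  have hcm : ∀ s t, s < t → c s < c t := fun s t h => by
    have : Real.exp (-t) < Real.exp (-s) := Real.exp_lt_exp.2 (by linarith)
    simp only [c]; linarith
  let U : Set M := ⋂ t ∈ Set.Ici (0:ℝ), {x | c t * g (Φ t x) ≤ 1/2}
  have hUmem : ∀ x, x ∈ U ↔ ∀ t, 0 ≤ t → c t * g (Φ t x) ≤ 1/2 := by
    intro x; simp only [U, Set.mem_iInter, Set.mem_Ici, Set.mem_setOf_eq]
  have hUc : IsClosed U := isClosed_biInter fun t _ =>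
    isClosed_le (continuous_const.mul (hg.comp (flow_cont Φ t))) continuous_const
  have hUR : ∀ x ∈ U, ω x ∈ L := by
    intro x hx
    by_contra h
    have h1 := g1 x trivial h
    have h2 := (hUmem x).1 hx 0 le_rfl
    rw [Φ.map_zero_apply, h1] at h2
    have := hc1 0 le_rfl
    linarith
  have key : ∀ y, ω y ∈ L → (∀ t, 0 ≤ t → c t * g (Φ t y) < 1/2) → y ∈ interior U := by
    intro y hy hlt
    have hN' : N ∈ 𝓝 (ω y) :=
      hN.mem_nhds (hAN _ trivial (by rwa [D.a_of_fix (D.w_fix y)]))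
    obtain ⟨T, hT, hT0⟩ := (((D.hw y).eventually hN').and (eventually_ge_atTop 0)).exists
    rw [mem_interior]
    refine ⟨{x | ∀ t ∈ Set.Icc (0:ℝ) T, c t * g (Φ t x) < 1/2} ∩ (fun x => Φ T x) ⁻¹' N, ?_,
      (tube_open Φ (g := fun t x => c t * g x)
        ((hc.comp continuous_fst).mul (hg.comp continuous_snd)) T (1/2)).inter
        (hN.preimage (flow_cont Φ T)), ⟨fun t ht => hlt t ht.1, hT⟩⟩
    rintro x ⟨h1, h2⟩
    rw [hUmem]
    intro t ht
    by_cases htT : t ≤ T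
    · exact (h1 t ⟨ht, htT⟩).le
    · have h3 := hst _ trivial h2 (t - T) (by linarith)
      rw [← Φ.map_add, sub_add_cancel] at h3
      nlinarith [hc2 t, gn (Φ t x)]
  have hAU : {x | α x ∈ L} ⊆ interior U := by
    intro x hx
    refine key x (D.low x hx) fun t _ => ?_
    rw [g0 _ trivial (by rw [D.a_flow]; exact hx)]
    norm_num
  refine ⟨U, hAU, ?_, ?_⟩
  · rintro s hs _ ⟨x, hx, rfl⟩
    rw [hUc.closure_eq] at hx
    refine key _ (by simp only [D.w_flow]; exact hUR x hx) fun t ht => ?_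
    simp only
    rw [← Φ.map_add]
    have h1 := (hUmem x).1 hx (t + s) (by linarith)
    rcases (gn (Φ (t + s) x)).eq_or_lt with h0 | h0
    · rw [← h0]; norm_num
    · have := mul_lt_mul_of_pos_right (hcm t (t + s) (by linarith)) h0
      linarith
  · apply Set.Subset.antisymm
    · intro x hx
      simp only [Set.mem_iInter]
      intro t _
      have h1 : x ∈ (fun x => Φ t x) '' {x | α x ∈ L} := by rw [hinv]; exact hx
      exact Set.image_mono (hAU.trans interior_subset) h1
    · intro x hx
      simp only [Set.mem_iInter, Set.mem_Ici] at hx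
      have h1 : ∀ t : ℝ, t ≤ 0 → Φ t x ∈ U := by
        intro t ht
        obtain ⟨y, hy, hyx⟩ := hx (-t) (by linarith)
        simp only at hyx
        rwa [← hyx, ← Φ.map_add, add_neg_cancel, Φ.map_zero_apply]
      have h2 : α x ∈ U := hUc.mem_of_tendsto (D.ha x)
        ((eventually_le_atBot 0).mono h1)
      have h3 := hUR _ h2
      rwa [D.w_of_fix (D.a_fix x)] at h3

end LimData

theorem mem_wMinus_singleton (Φ : Flow ℝ M) (x y : M) :
    x ∈ wMinus Φ {y} ↔ Tendsto (fun t : ℝ => Φ t x) atBot (𝓝 y) := by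
  rw [tendsto_iff_edist_tendsto_0]
  exact iff_of_eq (congrArg (fun f => Tendsto f atBot (𝓝 0)) (funext fun t => Metric.infEDist_singleton))

theorem mem_wPlus_singleton (Φ : Flow ℝ M) (x y : M) :
    x ∈ wPlus Φ {y} ↔ Tendsto (fun t : ℝ => Φ t x) atTop (𝓝 y) := by
  rw [tendsto_iff_edist_tendsto_0]
  exact iff_of_eq (congrArg (fun f => Tendsto f atTop (𝓝 0)) (funext fun t => Metric.infEDist_singleton))

/-- Suppose every flow line has a sink and a source, the fixed-point
set is finite, and the Smale order is antisymmetric.  Then for every lower set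
`L ⊆ M_fix`, the set `A_L = ⋃_{x ∈ L} W⁻(x)` is an attractor, its fixed-point set is
exactly `L`, and its dual repellor is `M ∖ W⁺(A_L) = ⋃_{x ∈ M_fix ∖ L} W⁺(x)`. -/
theorem lowerSet_attractor
    {M : Type*} [MetricSpace M] [CompactSpace M] (Φ : Flow ℝ M)
    (hconv : allOrbitsConverge Φ)
    (hfin : (fixedPoints Φ).Finite)
    (hanti : ∀ x y : M, smaleLe Φ x y → smaleLe Φ y x → x = y)
    (L : Set M) (hL : IsSmaleLowerSet Φ L) :
    IsAttractor (fun t x => Φ t x) (⋃ x ∈ L, wMinus Φ {x}) ∧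
    (⋃ x ∈ L, wMinus Φ {x}) ∩ fixedPoints Φ = L ∧
    Set.univ \ wPlus Φ (⋃ x ∈ L, wMinus Φ {x})
      = ⋃ x ∈ fixedPoints Φ \ L, wPlus Φ {x} := by
  choose hw ha using hconv
  choose ω hω using hw
  choose α hα using ha
  have D : LimData Φ L α ω := by
    refine ⟨hα, hω, hfin, hL.1, fun x hx => ?_⟩
    have f1 : ω x ∈ fixedPoints Φ :=
      fixed_of_lim Φ (fun s => tendsto_atTop_add_const_left _ s tendsto_id) (hω x)
    refine hL.2 _ hx _ f1 (Relation.ReflTransGen.single ⟨f1, hL.1 hx, x, ?_, ?_⟩)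
    · exact (mem_wMinus_singleton Φ x _).2 (hα x)
    · exact (mem_wPlus_singleton Φ x _).2 (hω x)
  have hA : (⋃ x ∈ L, wMinus Φ {x}) = {x | α x ∈ L} := by
    ext x
    simp only [Set.mem_iUnion, mem_wMinus_singleton, Set.mem_setOf_eq, exists_prop]
    constructor
    · rintro ⟨y, hy, h⟩
      rwa [tendsto_nhds_unique (hα x) h]
    · exact fun h => ⟨_, h, hα x⟩
  have hR : (⋃ x ∈ fixedPoints Φ \ L, wPlus Φ {x}) = {x | ω x ∉ L} := by
    ext x
    simp only [Set.mem_iUnion, mem_wPlus_singleton, Set.mem_setOf_eq, exists_prop]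
    constructor
    · rintro ⟨y, hy, h⟩
      rw [tendsto_nhds_unique (hω x) h]
      exact hy.2
    · exact fun h => ⟨_, ⟨D.w_fix x, h⟩, hω x⟩
  have hK : ClInv Φ (Set.univ : Set M) := ⟨isClosed_univ, fun _ _ _ => trivial⟩
  obtain ⟨cA, cR⟩ := D.closed_of_good hK (D.all_good hK)
  rw [Set.inter_univ] at cA cR
  rw [hA, hR]
  refine ⟨D.attractor cA cR, ?_, ?_⟩
  · ext x
    constructor
    · rintro ⟨h1, h2⟩
      have h3 : α x ∈ L := h1
      rwa [D.a_of_fix h2] at h3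
    · intro h
      refine ⟨?_, hL.1 h⟩
      show α x ∈ L
      rwa [D.a_of_fix (hL.1 h)]
  · ext x
    have h1 : Tendsto (fun t : ℝ => EMetric.infEdist (Φ t x) {x | α x ∈ L}) atTop
        (𝓝 (EMetric.infEdist (ω x) {x | α x ∈ L})) :=
      (Metric.continuous_infEDist.tendsto _).comp (hω x)
    have h2 : x ∈ wPlus Φ {x | α x ∈ L} ↔ ω x ∈ L := by
      have h3 : EMetric.infEdist (ω x) {x | α x ∈ L} = 0 ↔ ω x ∈ L := by
        refine (Metric.mem_iff_infEDist_zero_of_closed cA).symm.trans ?_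
        simp only [Set.mem_setOf_eq, D.a_of_fix (D.w_fix x)]
      rw [← h3]
      constructor
      · intro h
        exact tendsto_nhds_unique h1 h
      · intro h
        rw [h] at h1
        exact h1
    simp only [Set.mem_diff, Set.mem_univ, true_and, h2, Set.mem_setOf_eq]
end

section
/- Let M be a compact metric space and Φ a continuous flow on M such that lim_{t→±∞} Φ(t,x) exists for every x ∈ M, the fixed-point set M_fix is finite, and the Smale order ≼ on M_fix is antisymmetric. Then the map L ↦ A_L := ⋃_{x ∈ L} W⁻(x) is a bijection from the set of lower sets of (M_fix, ≼) onto the set of attractors of Φ, and it is a lattice isomorphism: A_{L₁ ∪ L₂} = A_{L₁} ∪ A_{L₂} and A_{L₁ ∩ L₂} = A_{L₁} ∩ A_{L₂} for all lower sets L₁, L₂. In particular, every attractor of Φ equals A_L for a unique lower set L ⊆ M_fix. -/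
open Filter

variable {M : Type*} [MetricSpace M] [CompactSpace M]

section Helpers

open Topology Set

theorem aux_mem_wMinus (Φ : Flow ℝ M) (p x : M) :
    x ∈ wMinus Φ {p} ↔ Tendsto (fun t : ℝ => Φ t x) atBot (𝓝 p) := by
  rw [tendsto_iff_edist_tendsto_0]
  simp only [wMinus, mem_setOf_eq]
  have : ∀ t : ℝ, EMetric.infEdist (Φ t x) {p} = edist (Φ t x) p :=
    fun t => Metric.infEDist_singleton
  simp only [this]

theorem aux_mem_wPlus (Φ : Flow ℝ M) (p x : M) :
    x ∈ wPlus Φ {p} ↔ Tendsto (fun t : ℝ => Φ t x) atTop (𝓝 p) := by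
  rw [tendsto_iff_edist_tendsto_0]
  simp only [wPlus, mem_setOf_eq]
  have : ∀ t : ℝ, EMetric.infEdist (Φ t x) {p} = edist (Φ t x) p :=
    fun t => Metric.infEDist_singleton
  simp only [this]

/-- The set `A_L`. -/
def auxA (Φ : Flow ℝ M) (L : Set M) : Set M := ⋃ x ∈ L, wMinus Φ {x}

theorem aux_mem_A (Φ : Flow ℝ M) (L : Set M) (x : M) :
    x ∈ auxA Φ L ↔ ∃ p ∈ L, Tendsto (fun t : ℝ => Φ t x) atBot (𝓝 p) := by
  simp [auxA, aux_mem_wMinus]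

theorem aux_fix_bot (Φ : Flow ℝ M) {p x : M}
    (h : Tendsto (fun t : ℝ => Φ t x) atBot (𝓝 p)) : p ∈ fixedPoints Φ := by
  intro s
  have h1 : Tendsto (fun t : ℝ => Φ s (Φ t x)) atBot (𝓝 (Φ s p)) :=
    ((Φ.continuous_toFun s).tendsto p).comp h
  have h2 : Tendsto (fun t : ℝ => Φ (s + t) x) atBot (𝓝 p) :=
    h.comp (tendsto_atBot_add_const_left _ s tendsto_id)
  simp only [Φ.map_add] at h2
  exact tendsto_nhds_unique h1 h2

theorem aux_fix_top (Φ : Flow ℝ M) {p x : M}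
    (h : Tendsto (fun t : ℝ => Φ t x) atTop (𝓝 p)) : p ∈ fixedPoints Φ := by
  intro s
  have h1 : Tendsto (fun t : ℝ => Φ s (Φ t x)) atTop (𝓝 (Φ s p)) :=
    ((Φ.continuous_toFun s).tendsto p).comp h
  have h2 : Tendsto (fun t : ℝ => Φ (s + t) x) atTop (𝓝 p) :=
    h.comp (tendsto_atTop_add_const_left _ s tendsto_id)
  simp only [Φ.map_add] at h2
  exact tendsto_nhds_unique h1 h2

theorem aux_shift_bot (Φ : Flow ℝ M) {p x : M} (s : ℝ)
    (h : Tendsto (fun t : ℝ => Φ t x) atBot (𝓝 p)) :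
    Tendsto (fun t : ℝ => Φ t (Φ s x)) atBot (𝓝 p) := by
  have h2 : Tendsto (fun t : ℝ => Φ (t + s) x) atBot (𝓝 p) :=
    h.comp (tendsto_atBot_add_const_right _ s tendsto_id)
  simpa only [Φ.map_add] using h2

theorem aux_inv (Φ : Flow ℝ M) (L : Set M) {x : M} (s : ℝ) (h : x ∈ auxA Φ L) :
    Φ s x ∈ auxA Φ L := by
  rw [aux_mem_A] at h ⊢
  obtain ⟨p, hp, h⟩ := h
  exact ⟨p, hp, aux_shift_bot Φ s h⟩

theorem aux_neg_cancel (Φ : Flow ℝ M) (s : ℝ) (x : M) : Φ (-s) (Φ s x) = x := by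
  rw [← Φ.map_add]; simp

theorem aux_cancel_neg (Φ : Flow ℝ M) (s : ℝ) (x : M) : Φ s (Φ (-s) x) = x := by
  rw [← Φ.map_add]; simp

theorem aux_inv_rev (Φ : Flow ℝ M) (L : Set M) {x : M} (s : ℝ) (h : Φ s x ∈ auxA Φ L) :
    x ∈ auxA Φ L := by
  have := aux_inv Φ L (-s) h
  rwa [aux_neg_cancel] at this

/-- If the backward orbit stays eventually in a closed set all of whose fixed points lie in `L`,
the point is in `A_L`. -/
theorem aux_back (Φ : Flow ℝ M) (hconv : allOrbitsConverge Φ) (L N : Set M)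
    (hN : IsClosed N) (hNL : N ∩ fixedPoints Φ ⊆ L) {x : M} (c : ℝ)
    (h : ∀ t ≤ c, Φ t x ∈ N) : x ∈ auxA Φ L := by
  obtain ⟨p, hp⟩ := (hconv x).2
  rw [aux_mem_A]
  refine ⟨p, hNL ⟨?_, aux_fix_bot Φ hp⟩, hp⟩
  exact hN.mem_of_tendsto hp ((eventually_le_atBot c).mono h)

theorem aux_not_mem (Φ : Flow ℝ M) (L : Set M) (p x : M) (hp : p ∉ L)
    (h : Tendsto (fun t : ℝ => Φ t x) atBot (𝓝 p)) : x ∉ auxA Φ L := by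
  rw [aux_mem_A]
  rintro ⟨q, hq, hq'⟩
  exact hp (tendsto_nhds_unique h hq' ▸ hq)

/-- First exit point of the backward orbit. -/
theorem aux_exit (Φ : Flow ℝ M) (L O : Set M) (hO : IsOpen O) (hLO : L ⊆ O) {x : M}
    (hx : x ∈ auxA Φ L) (hxO : x ∉ O) : ∃ s : ℝ, Φ s x ∉ O ∧ ∀ t < s, Φ t x ∈ O := by
  rw [aux_mem_A] at hx
  obtain ⟨p, hp, h⟩ := hx
  have hev : ∀ᶠ t in atBot, Φ t x ∈ O := h (hO.mem_nhds (hLO hp))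
  obtain ⟨b, hb⟩ := eventually_atBot.1 hev
  have hcont : Continuous fun t : ℝ => Φ t x := by fun_prop
  have hcl : IsClosed {t : ℝ | Φ t x ∉ O} := (hO.isClosed_compl).preimage hcont
  have hne : ({t : ℝ | Φ t x ∉ O}).Nonempty := ⟨0, by simpa using hxO⟩
  have hbd : BddBelow {t : ℝ | Φ t x ∉ O} :=
    ⟨b, fun t ht => le_of_not_ge fun h => ht (hb t h)⟩
  refine ⟨_, hcl.csInf_mem hne hbd, fun t ht => ?_⟩
  by_contra hc
  exact absurd (csInf_le hbd hc) (not_le.2 ht)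

theorem aux_tube (O : Set (ℝ × M)) (hO : IsOpen O) (a b : ℝ) :
    IsOpen {x : M | ∀ t ∈ Icc a b, (t, x) ∈ O} := by
  rw [isOpen_iff_forall_mem_open]
  intro x hx
  obtain ⟨u, v, hu, hv, hsu, hxv, huv⟩ := generalized_tube_lemma (isCompact_Icc (a := a) (b := b))
    (isCompact_singleton (x := x)) hO (by
      rintro ⟨t, y⟩ ⟨ht, hy⟩
      rw [mem_singleton_iff] at hy
      simp only at hy ht
      subst hy
      exact hx t ht)
  exact ⟨v, fun y hy t ht => huv ⟨hsu ht, hy⟩, hv, hxv rfl⟩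

/-- Isolating neighborhood. -/
theorem aux_nbhd (Φ : Flow ℝ M) (hfin : (fixedPoints Φ).Finite) (L C : Set M)
    (hL : L ⊆ fixedPoints Φ) (hC : IsClosed C) (hCL : C ∩ fixedPoints Φ ⊆ L) :
    ∃ N : Set M, IsClosed N ∧ C ⊆ interior N ∧ L ⊆ interior N ∧ N ∩ fixedPoints Φ ⊆ L := by
  have h1 : IsClosed (C ∪ L) := hC.union (hfin.subset hL).isClosed
  have h2 : IsOpen (fixedPoints Φ \ L)ᶜ := (hfin.subset diff_subset).isClosed.isOpen_compl
  obtain ⟨u, hu, hsu, hut⟩ := normal_exists_closure_subset h1 h2 (by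
    rintro x (hx | hx) ⟨h3, h4⟩
    · exact h4 (hCL ⟨hx, h3⟩)
    · exact h4 hx)
  have hui : u ⊆ interior (closure u) := interior_maximal subset_closure hu
  refine ⟨closure u, isClosed_closure, fun x hx => hui (hsu (Or.inl hx)),
    fun x hx => hui (hsu (Or.inr hx)), fun x hx => ?_⟩
  by_contra hc
  exact hut hx.1 ⟨hx.2, hc⟩

theorem aux_A_fix (Φ : Flow ℝ M) (L : Set M) : auxA Φ L ∩ fixedPoints Φ ⊆ L := by
  rintro x ⟨hx, hf⟩
  rw [aux_mem_A] at hx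
  obtain ⟨p, hp, h⟩ := hx
  have h2 : (fun t : ℝ => Φ t x) = fun _ => x := funext hf
  rw [h2] at h
  exact tendsto_nhds_unique tendsto_const_nhds h ▸ hp

/-- Decreasing intersections of "bad" sets are bad. -/
theorem aux_chain (Φ : Flow ℝ M) (hconv : allOrbitsConverge Φ) (hfin : (fixedPoints Φ).Finite)
    (L : Set M) (hL : L ⊆ fixedPoints Φ) (c : Set (Set M))
    (hc : ∀ K ∈ c, IsClosed K ∧ (∀ x ∈ K, ∀ t : ℝ, Φ t x ∈ K) ∧ ¬ IsClosed (auxA Φ L ∩ K))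
    (hchain : IsChain (· ⊆ ·) c) (hne : c.Nonempty) : ¬ IsClosed (auxA Φ L ∩ ⋂₀ c) := by
  intro hcl
  obtain ⟨N, hN, hCN, hLN, hNL⟩ := aux_nbhd Φ hfin L _ hL hcl
    (fun x hx => aux_A_fix Φ L ⟨hx.1.1, hx.2⟩)
  set D : Set M := {y | y ∉ interior N ∧ ∀ t : ℝ, t ≤ 0 → Φ t y ∈ N} with hD
  have hDcl : IsClosed D := by
    have : D = (interior N)ᶜ ∩ ⋂ t : ℝ, ⋂ (_ : t ≤ 0), (fun y => Φ t y) ⁻¹' N := by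
      ext y; simp [hD]
    rw [this]
    refine isOpen_interior.isClosed_compl.inter
      (isClosed_iInter fun t => isClosed_iInter fun _ => hN.preimage (by fun_prop))
  have hDA : ∀ y ∈ D, y ∈ auxA Φ L := fun y hy => aux_back Φ hconv L N hN hNL 0 hy.2
  have hne' : ∀ K ∈ c, (K ∩ D).Nonempty := by
    intro K hK
    obtain ⟨hKc, hKi, hKn⟩ := hc K hK
    by_contra hem
    apply hKn
    have hsub : auxA Φ L ∩ K ⊆ interior N := by
      rintro x ⟨hxA, hxK⟩
      by_contra hxN
      obtain ⟨s, hs, hs'⟩ := aux_exit Φ L _ isOpen_interior hLN hxA hxN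
      refine hem ⟨Φ s x, hKi x hxK s, hs, fun t ht => ?_⟩
      have hlt : ∀ t < (0:ℝ), Φ t (Φ s x) ∈ N := fun t ht => by
        rw [← Φ.map_add]; exact interior_subset (hs' _ (by linarith))
      have hcont : Continuous fun t : ℝ => Φ t (Φ s x) := by fun_prop
      have h3 : closure (Iio (0:ℝ)) ⊆ (fun t : ℝ => Φ t (Φ s x)) ⁻¹' N :=
        closure_minimal (fun t ht => hlt t ht) (hN.preimage hcont)
      rw [closure_Iio] at h3
      exact h3 ht
    have : auxA Φ L ∩ K = K ∩ ⋂ t : ℝ, (fun y => Φ t y) ⁻¹' N := by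
      ext x
      constructor
      · rintro ⟨h1, h2⟩
        refine ⟨h2, mem_iInter.2 fun t => ?_⟩
        have h5 : Φ t x ∈ N := interior_subset (hsub ⟨aux_inv Φ L t h1, hKi x h2 t⟩)
        exact h5
      · rintro ⟨h1, h2⟩
        exact ⟨aux_back Φ hconv L N hN hNL 0 fun t _ => mem_iInter.1 h2 t, h1⟩
    rw [this]
    exact hKc.inter (isClosed_iInter fun t => hN.preimage (by fun_prop))
  have : Nonempty c := hne.to_subtype
  obtain ⟨y, hy⟩ := IsCompact.nonempty_iInter_of_directed_nonempty_isCompact_isClosed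
    (fun K : c => (K : Set M) ∩ D) (by
      intro K K'
      rcases hchain.total K.2 K'.2 with h | h
      · exact ⟨K, Subset.rfl, inter_subset_inter_left _ h⟩
      · exact ⟨K', inter_subset_inter_left _ h, Subset.rfl⟩)
    (fun K => hne' K K.2) (fun K => ((hc K K.2).1.inter hDcl).isCompact)
    (fun K => (hc K K.2).1.inter hDcl)
  rw [mem_iInter] at hy
  obtain ⟨K₀⟩ := this
  have hyD := (hy K₀).2
  exact hyD.1 (hCN ⟨hDA y hyD, fun K hK => (hy ⟨K, hK⟩).1⟩)

/-- The Baire category step: some piece can be removed. -/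
theorem aux_step (Φ : Flow ℝ M) (hconv : allOrbitsConverge Φ) (hfin : (fixedPoints Φ).Finite)
    (L : Set M) (hL : IsSmaleLowerSet Φ L) (K : Set M) (hK : IsClosed K)
    (hKi : ∀ x ∈ K, ∀ t : ℝ, Φ t x ∈ K)
    (hmin : ∀ K' ⊆ K, IsClosed K' → (∀ x ∈ K', ∀ t : ℝ, Φ t x ∈ K') → K' ≠ K →
      IsClosed (auxA Φ L ∩ K')) : IsClosed (auxA Φ L ∩ K) := by
  by_cases hX : (K \ fixedPoints Φ).Nonempty
  swap
  · rw [not_nonempty_iff_eq_empty, diff_eq_empty] at hX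
    exact (hfin.subset (inter_subset_right.trans hX)).isClosed
  obtain ⟨B, hB, -, hLB, hBL⟩ := aux_nbhd Φ hfin L ∅ hL.1 isClosed_empty (by simp)
  obtain ⟨B', hB', -, hVB, hBV⟩ := aux_nbhd Φ hfin (fixedPoints Φ \ L) ∅ diff_subset
    isClosed_empty (by simp)
  let F : ℕ ⊕ ℕ → Set M := fun i => match i with
    | Sum.inl n => {x | ∀ t : ℝ, (n : ℝ) ≤ |t| → Φ t x ∈ B}
    | Sum.inr n => {x | ∀ t : ℝ, t ≤ -(n : ℝ) → Φ t x ∈ B'}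
  have hFc : ∀ i, IsClosed (F i) := by
    rintro (n | n)
    · have : F (Sum.inl n) = ⋂ t : ℝ, ⋂ (_ : (n : ℝ) ≤ |t|), (fun y => Φ t y) ⁻¹' B := by
        ext y; simp [F]
      rw [this]
      exact isClosed_iInter fun t => isClosed_iInter fun _ => hB.preimage (by fun_prop)
    · have : F (Sum.inr n) = ⋂ t : ℝ, ⋂ (_ : t ≤ -(n : ℝ)), (fun y => Φ t y) ⁻¹' B' := by
        ext y; simp [F]
      rw [this]
      exact isClosed_iInter fun t => isClosed_iInter fun _ => hB'.preimage (by fun_prop)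
  have hFu : ∀ x, ∃ i, x ∈ F i := by
    intro x
    obtain ⟨⟨q, hq⟩, ⟨p, hp⟩⟩ := hconv x
    have hpf := aux_fix_bot Φ hp
    have hqf := aux_fix_top Φ hq
    by_cases hpL : p ∈ L
    · have hqL : q ∈ L := hL.2 p hpL q hqf (Relation.ReflTransGen.single
        ⟨hqf, hpf, x, (aux_mem_wMinus Φ p x).2 hp, (aux_mem_wPlus Φ q x).2 hq⟩)
      have e1 : ∀ᶠ t in atTop, Φ t x ∈ B := hq (mem_interior_iff_mem_nhds.1 (hLB hqL))
      have e2 : ∀ᶠ t in atBot, Φ t x ∈ B := hp (mem_interior_iff_mem_nhds.1 (hLB hpL))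
      obtain ⟨a, ha⟩ := eventually_atTop.1 e1
      obtain ⟨b, hb⟩ := eventually_atBot.1 e2
      obtain ⟨n, hn⟩ := exists_nat_ge (max a (-b))
      refine ⟨Sum.inl n, fun t ht => ?_⟩
      have h1 := le_max_left a (-b)
      have h2 := le_max_right a (-b)
      rcases le_abs.1 ht with h | h
      · exact ha t (by linarith)
      · exact hb t (by linarith)
    · have e2 : ∀ᶠ t in atBot, Φ t x ∈ B' := hp (mem_interior_iff_mem_nhds.1 (hVB ⟨hpf, hpL⟩))
      obtain ⟨b, hb⟩ := eventually_atBot.1 e2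
      obtain ⟨n, hn⟩ := exists_nat_ge (-b)
      exact ⟨Sum.inr n, fun t ht => hb t (by linarith)⟩
  have hfc : IsClosed (fixedPoints Φ) := hfin.isClosed
  have hlc : LocallyCompactSpace ↥(K \ fixedPoints Φ) :=
    (hK.isLocallyClosed.inter hfc.isOpen_compl.isLocallyClosed).locallyCompactSpace
  have hXn : Nonempty ↥(K \ fixedPoints Φ) := hX.to_subtype
  obtain ⟨i, ⟨x₀, hx₀⟩, hi⟩ := nonempty_interior_of_iUnion_of_closed
    (f := fun i => ((↑) : ↥(K \ fixedPoints Φ) → M) ⁻¹' F i)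
    (fun i => (hFc i).preimage continuous_subtype_val)
    (by
      ext x
      obtain ⟨i, hi⟩ := hFu x
      simp only [mem_iUnion, mem_univ, iff_true]
      exact ⟨i, hi⟩)
  rw [mem_interior_iff_mem_nhds, nhds_subtype, mem_comap] at hi
  obtain ⟨O₁, hO₁, hO₁F⟩ := hi
  obtain ⟨O₂, hO₂₁, hO₂, hx₀O⟩ := mem_nhds_iff.1 hO₁
  set O : Set M := O₂ \ fixedPoints Φ with hOdef
  have hO : IsOpen O := hO₂.sdiff hfc
  have hOF : ∀ x ∈ K, x ∈ O → x ∈ F i := fun x hxK hxO =>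
    hO₁F (show (⟨x, hxK, hxO.2⟩ : ↥(K \ fixedPoints Φ)) ∈ _ from hO₂₁ hxO.1)
  have hx₀O' : x₀ ∈ O := ⟨hx₀O, hx₀.2⟩
  set K' : Set M := K ∩ ⋂ t : ℝ, (fun y => Φ t y) ⁻¹' Oᶜ with hK'
  have hmem : ∀ x, x ∈ K' ↔ x ∈ K ∧ ∀ t : ℝ, Φ t x ∉ O := by
    intro x; simp [hK']
  have hK'c : IsClosed (auxA Φ L ∩ K') := by
    apply hmin K' inter_subset_left
    · exact hK.inter (isClosed_iInter fun t => hO.isClosed_compl.preimage (by fun_prop))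
    · intro x hx t
      rw [hmem] at hx ⊢
      refine ⟨hKi x hx.1 t, fun s => ?_⟩
      rw [← Φ.map_add]
      exact hx.2 _
    · intro h
      have h3 : x₀ ∈ K' := h ▸ hx₀.1
      rw [hmem] at h3
      exact h3.2 0 (by simpa using hx₀O')
  have hout : ∀ x ∈ K, x ∉ K' → ∃ t : ℝ, Φ t x ∈ O ∧ Φ t x ∈ F i := by
    intro x hx hx'
    rw [hmem] at hx'
    push Not at hx'
    obtain ⟨t, ht⟩ := hx' hx
    exact ⟨t, ht, hOF _ (hKi x hx t) ht⟩
  rcases i with n | n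
  · -- tube goes from `L` to `L`
    have hFA : F (Sum.inl n) ⊆ auxA Φ L := fun x hx =>
      aux_back Φ hconv L B hB hBL (-(n:ℝ)) fun t ht => hx t (by
        rw [le_abs]; right; linarith)
    refine isClosed_of_closure_subset ?_
    intro x hx
    have hxK : x ∈ K := closure_minimal inter_subset_right hK hx
    refine ⟨?_, hxK⟩
    by_contra hxA
    apply hxA
    apply aux_back Φ hconv L B hB hBL 0
    intro s _
    set m : ℝ := n + |s| with hm
    set T : Set M := (fun q : ℝ × M => Φ q.1 q.2) '' (Icc (-m) m ×ˢ F (Sum.inl n)) with hT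
    have hTc : IsClosed T := by
      refine (((isCompact_Icc (a := -m) (b := m)).prod (hFc (Sum.inl n)).isCompact).image ?_).isClosed
      fun_prop
    have hTA : T ⊆ auxA Φ L := by
      rintro _ ⟨⟨t, z⟩, ⟨-, hz⟩, rfl⟩
      exact aux_inv Φ L t (hFA hz)
    have hcov : auxA Φ L ∩ K ⊆ (auxA Φ L ∩ K') ∪ T ∪ (fun y => Φ s y) ⁻¹' B := by
      rintro y ⟨hyA, hyK⟩
      by_cases hyK' : y ∈ K'
      · exact Or.inl (Or.inl ⟨hyA, hyK'⟩)
      obtain ⟨t, -, ht⟩ := hout y hyK hyK'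
      by_cases htm : |t| ≤ m
      · left; right
        refine ⟨(-t, Φ t y), ⟨?_, ht⟩, aux_neg_cancel Φ t y⟩
        rw [← abs_neg] at htm
        exact abs_le.1 htm
      · right
        have h4 := ht (s - t) (by
          have := abs_sub_abs_le_abs_sub t s
          rw [abs_sub_comm] at this
          linarith [not_le.1 htm])
        rw [← Φ.map_add, sub_add_cancel] at h4
        exact h4
    have hcl : IsClosed ((auxA Φ L ∩ K') ∪ T ∪ (fun y => Φ s y) ⁻¹' B) :=
      (hK'c.union hTc).union (hB.preimage (by fun_prop))
    rcases closure_minimal hcov hcl hx with (h | h) | h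
    · exact absurd h.1 hxA
    · exact absurd (hTA h) hxA
    · exact h
  · have : auxA Φ L ∩ K = auxA Φ L ∩ K' := by
      ext x
      refine ⟨fun ⟨h1, h2⟩ => ⟨h1, ?_⟩, fun ⟨h1, h2⟩ => ⟨h1, h2.1⟩⟩
      by_contra h3
      obtain ⟨t, -, ht⟩ := hout x h2 h3
      obtain ⟨p, hp⟩ := (hconv (Φ t x)).2
      have hpB : p ∈ B' := hB'.mem_of_tendsto hp ((eventually_le_atBot _).mono ht)
      exact aux_not_mem Φ L p _ (hBV ⟨hpB, aux_fix_bot Φ hp⟩).2 hp (aux_inv Φ L t h1)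
    rw [this]
    exact hK'c

theorem aux_closed (Φ : Flow ℝ M) (hconv : allOrbitsConverge Φ) (hfin : (fixedPoints Φ).Finite)
    (L : Set M) (hL : IsSmaleLowerSet Φ L) : IsClosed (auxA Φ L) := by
  by_contra hn
  let S : Set (Set M) :=
    {K | IsClosed K ∧ (∀ x ∈ K, ∀ t : ℝ, Φ t x ∈ K) ∧ ¬ IsClosed (auxA Φ L ∩ K)}
  obtain ⟨K, -, hKm⟩ := zorn_superset_nonempty S (by
    intro c hc hch hne
    refine ⟨⋂₀ c, ⟨isClosed_sInter fun K hK => (hc hK).1, fun x hx t K hK =>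
      (hc hK).2.1 x (hx K hK) t, ?_⟩, fun s hs => sInter_subset_of_mem hs⟩
    exact aux_chain Φ hconv hfin L hL.1 c (fun K hK => hc hK) hch hne) univ
    ⟨isClosed_univ, fun _ _ _ => mem_univ _, by simpa using hn⟩
  refine hKm.prop.2.2 (aux_step Φ hconv hfin L hL K hKm.prop.1 hKm.prop.2.1 ?_)
  intro K' hsub hc hi hneq
  by_contra hcon
  exact hneq (Subset.antisymm hsub (hKm.le_of_le ⟨hc, hi, hcon⟩ hsub))

/-- Stability: the set of points whose forward orbit stays in `N` is a neighborhood of `A_L`. -/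
theorem aux_stable (Φ : Flow ℝ M) (hconv : allOrbitsConverge Φ) (L N : Set M)
    (hN : IsClosed N) (hAN : auxA Φ L ⊆ interior N) (hNL : N ∩ fixedPoints Φ ⊆ L) :
    auxA Φ L ⊆ interior {x | ∀ t : ℝ, 0 ≤ t → Φ t x ∈ N} := by
  let D : ℕ → Set M := fun k => (interior N)ᶜ ∩
    ⋂ t : ℝ, ⋂ (_ : t ∈ Icc (-(k:ℝ)) 0), (fun y => Φ t y) ⁻¹' N
  have hDm : ∀ k y, y ∈ D k ↔ y ∉ interior N ∧ ∀ t : ℝ, t ∈ Icc (-(k:ℝ)) 0 → Φ t y ∈ N := by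
    intro k y; simp [D]
  have hDc : ∀ k, IsClosed (D k) := fun k => isOpen_interior.isClosed_compl.inter
    (isClosed_iInter fun t => isClosed_iInter fun _ => hN.preimage (by fun_prop))
  have hex : ∃ k, ¬ (D k).Nonempty := by
    by_contra hcon
    push Not at hcon
    obtain ⟨y, hy⟩ := IsCompact.nonempty_iInter_of_sequence_nonempty_isCompact_isClosed D
      (fun k y hy => by
        rw [hDm] at hy ⊢
        refine ⟨hy.1, fun t ht => hy.2 t ⟨?_, ht.2⟩⟩
        have := ht.1
        push_cast
        linarith) hcon (hDc 0).isCompact hDc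
    rw [mem_iInter] at hy
    refine ((hDm 0 y).1 (hy 0)).1 (hAN (aux_back Φ hconv L N hN hNL 0 fun t ht => ?_))
    obtain ⟨k, hk⟩ := exists_nat_ge (-t)
    exact ((hDm k y).1 (hy k)).2 t ⟨by linarith, ht⟩
  obtain ⟨k, hk⟩ := hex
  have hWo : IsOpen {x : M | ∀ t ∈ Icc (0:ℝ) k, (t, x) ∈ (fun q : ℝ × M => Φ q.1 q.2) ⁻¹' interior N} :=
    aux_tube _ (isOpen_interior.preimage (by fun_prop)) _ _
  intro a ha
  refine mem_interior.2 ⟨_, ?_, hWo, fun t _ => hAN (aux_inv Φ L t ha)⟩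
  intro x hx t₀ ht₀
  by_contra hcon
  let S : Set ℝ := {t : ℝ | 0 ≤ t ∧ Φ t x ∉ interior N}
  have hScl : IsClosed S := by
    have hcont : Continuous fun t : ℝ => Φ t x := by fun_prop
    exact isClosed_Ici.inter (isOpen_interior.isClosed_compl.preimage hcont)
  have hSne : S.Nonempty := ⟨t₀, ht₀, fun h => hcon (interior_subset h)⟩
  have hSb : BddBelow S := ⟨0, fun t ht => ht.1⟩
  have hs := hScl.csInf_mem hSne hSb
  set s := sInf S
  have hks : (k:ℝ) < s := by
    by_contra hle
    exact hs.2 (hx s ⟨hs.1, not_lt.1 hle⟩)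
  have hlt : ∀ t, 0 ≤ t → t < s → Φ t x ∈ interior N := by
    intro t h0 hts
    by_contra h
    exact absurd (csInf_le hSb ⟨h0, h⟩) (not_le.2 hts)
  refine hk ⟨Φ s x, (hDm k _).2 ⟨hs.2, fun t ht => ?_⟩⟩
  rcases eq_or_lt_of_le ht.2 with h0 | h0
  · subst h0
    have hcont : Continuous fun t : ℝ => Φ t x := by fun_prop
    have h3 : closure (Ioo (0:ℝ) s) ⊆ (fun t : ℝ => Φ t x) ⁻¹' N :=
      closure_minimal (fun t ht => show Φ t x ∈ N from interior_subset (hlt t ht.1.le ht.2))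
        (hN.preimage hcont)
    have hs0 : (0:ℝ) < s := lt_of_le_of_lt (Nat.cast_nonneg k) hks
    rw [closure_Ioo hs0.ne] at h3
    rw [Φ.map_zero_apply]
    exact h3 ⟨hs0.le, le_rfl⟩
  · rw [← Φ.map_add]
    exact interior_subset (hlt _ (by linarith [ht.1]) (by linarith))

theorem aux_attractor (Φ : Flow ℝ M) (hconv : allOrbitsConverge Φ)
    (hfin : (fixedPoints Φ).Finite) (L : Set M) (hL : IsSmaleLowerSet Φ L) :
    IsAttractor (fun t x => Φ t x) (auxA Φ L) := by
  have hA := aux_closed Φ hconv hfin L hL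
  obtain ⟨N, hN, hAN, -, hNL⟩ := aux_nbhd Φ hfin L _ hL.1 hA (aux_A_fix Φ L)
  set P : Set M := {x | ∀ t : ℝ, 0 ≤ t → Φ t x ∈ N} with hP
  have hAP : auxA Φ L ⊆ interior P := aux_stable Φ hconv L N hN hAN hNL
  have hPc : IsClosed P := by
    have : P = ⋂ t : ℝ, ⋂ (_ : 0 ≤ t), (fun y => Φ t y) ⁻¹' N := by ext; simp [hP]
    rw [this]
    exact isClosed_iInter fun t => isClosed_iInter fun _ => hN.preimage (by fun_prop)
  have hPN : P ⊆ N := fun x hx => by simpa using hx 0 le_rfl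
  have hPi : ∀ x ∈ P, ∀ t : ℝ, 0 ≤ t → Φ t x ∈ P := fun x hx t ht s hs => by
    rw [← Φ.map_add]; exact hx _ (by linarith)
  obtain ⟨g, hg0, hg1, -⟩ := exists_continuous_zero_one_of_isClosed hA
    (isOpen_interior (s := P)).isClosed_compl (disjoint_compl_right_iff_subset.2 hAP)
  -- uniform attraction
  have hunif : ∃ k : ℕ, ∀ x ∈ P, ∀ t : ℝ, (k:ℝ) ≤ t → g (Φ t x) < 1 / 4 := by
    let E : ℕ → Set M := fun k => {y | 1 / 4 ≤ g y} ∩ (fun y => Φ (-(k:ℝ)) y) ⁻¹' P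
    have hEc : ∀ k, IsClosed (E k) := fun k =>
      (isClosed_le continuous_const g.continuous).inter (hPc.preimage (by fun_prop))
    have hex : ∃ k, ¬ (E k).Nonempty := by
      by_contra hcon
      push Not at hcon
      obtain ⟨y, hy⟩ := IsCompact.nonempty_iInter_of_sequence_nonempty_isCompact_isClosed E
        (fun k y hy => by
          refine ⟨hy.1, ?_⟩
          have := hPi _ hy.2 1 zero_le_one
          simp only [← Φ.map_add] at this
          simp only [mem_preimage]
          convert this using 2
          push_cast; ring) hcon (hEc 0).isCompact hEc
      rw [mem_iInter] at hy
      have hyA : y ∈ auxA Φ L := by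
        refine aux_back Φ hconv L N hN hNL 0 fun t ht => ?_
        obtain ⟨k, hk⟩ := exists_nat_ge (-t)
        have := (hy k).2 (t + k) (by linarith)
        rw [← Φ.map_add] at this
        simpa using this
      have h1 := (hy 0).1
      have h2 := hg0 hyA
      simp only [mem_setOf_eq, h2, Pi.zero_apply] at h1
      norm_num at h1
    obtain ⟨k, hk⟩ := hex
    refine ⟨k, fun x hx t ht => ?_⟩
    by_contra hcon
    refine hk ⟨Φ t x, not_lt.1 hcon, ?_⟩
    simp only [mem_preimage]
    rw [← Φ.map_add]
    exact hPi x hx _ (by linarith)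
  obtain ⟨k, hk⟩ := hunif
  let w : ℝ → ℝ := fun t => 1 / 4 + 1 / (4 * (1 + |t|))
  have hwc : Continuous w := by
    refine continuous_const.add (continuous_const.div (by fun_prop) fun t => ?_)
    positivity
  have hw4 : ∀ t, 1 / 4 < w t := fun t => by
    have : 0 < 1 / (4 * (1 + |t|)) := by positivity
    simp only [w]; linarith
  have hw0 : w 0 = 1 / 2 := by simp only [w]; norm_num
  have hwlt : ∀ s t : ℝ, 0 ≤ t → 0 < s → w (t + s) < w t := by
    intro s t ht hs
    simp only [w]
    rw [abs_of_nonneg ht, abs_of_nonneg (by linarith : 0 ≤ t + s)]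
    have : 1 / (4 * (1 + (t + s))) < 1 / (4 * (1 + t)) := by
      apply one_div_lt_one_div_of_lt <;> linarith
    linarith
  let U : Set M := {x | ∀ t : ℝ, 0 ≤ t → g (Φ t x) ≤ w t}
  let U' : Set M := {x | ∀ t : ℝ, 0 ≤ t → g (Φ t x) < w t}
  have hUc : IsClosed U := by
    have : U = ⋂ t : ℝ, ⋂ (_ : 0 ≤ t), {x | g (Φ t x) ≤ w t} := by ext; simp [U]
    rw [this]
    exact isClosed_iInter fun t => isClosed_iInter fun _ =>
      isClosed_le (by fun_prop) continuous_const
  have hgP : ∀ x, g x ≤ 1 / 2 → x ∈ interior P := by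
    intro x hx
    by_contra hcon
    have := hg1 hcon
    rw [this] at hx
    norm_num at hx
  have hUP : U ⊆ interior P := fun x hx => by
    have := hx 0 le_rfl
    rw [hw0, Φ.map_zero_apply] at this
    exact hgP x this
  have hU'U : U' ⊆ U := fun x hx t ht => (hx t ht).le
  have hU'o : IsOpen U' := by
    have : U' = interior P ∩ {x : M | ∀ t ∈ Icc (0:ℝ) k, (t, x) ∈
        {q : ℝ × M | g (Φ q.1 q.2) < w q.1}} := by
      ext x
      constructor
      · exact fun hx => ⟨hUP (hU'U hx), fun t ht => hx t ht.1⟩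
      · rintro ⟨h1, h2⟩ t ht
        rcases le_total t k with h | h
        · exact h2 t ⟨ht, h⟩
        · exact (hk x (interior_subset h1) t h).trans (hw4 t)
    rw [this]
    refine isOpen_interior.inter (aux_tube _ (isOpen_lt ?_ ?_) _ _) <;> fun_prop
  have hU'i : U' ⊆ interior U := interior_maximal hU'U hU'o
  have hAU' : auxA Φ L ⊆ U' := by
    intro x hx t ht
    have := hg0 (aux_inv Φ L t hx)
    rw [this]
    have := hw4 t
    simp only [Pi.zero_apply]; linarith
  refine ⟨hA.isCompact, fun t => ?_, U, hAU'.trans hU'i, ?_, ?_⟩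
  · ext x
    constructor
    · rintro ⟨y, hy, rfl⟩
      exact aux_inv Φ L t hy
    · intro hx
      exact ⟨Φ (-t) x, aux_inv Φ L _ hx, aux_cancel_neg Φ t x⟩
  · rintro s hs _ ⟨x, hx, rfl⟩
    rw [hUc.closure_eq] at hx
    apply hU'i
    intro t ht
    simp only [← Φ.map_add]
    exact (hx (t + s) (by linarith)).trans_lt (hwlt s t ht hs)
  · ext x
    simp only [mem_iInter, mem_Ici]
    constructor
    · intro hx t _
      exact ⟨Φ (-t) x, hU'U (hAU' (aux_inv Φ L _ hx)), aux_cancel_neg Φ t x⟩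
    · intro hx
      refine aux_back Φ hconv L N hN hNL 0 fun t ht => ?_
      obtain ⟨y, hy, hyx⟩ := hx (-t) (by linarith)
      rw [← hyx]
      simp only [aux_cancel_neg]
      exact hPN (interior_subset (hUP hy))

theorem aux_unique (Φ : Flow ℝ M) (L : Set M) (hL : L ⊆ fixedPoints Φ) :
    L = auxA Φ L ∩ fixedPoints Φ := by
  refine Subset.antisymm (fun x hx => ⟨(aux_mem_A Φ L x).2 ⟨x, hx, ?_⟩, hL hx⟩) (aux_A_fix Φ L)
  have h2 : (fun t : ℝ => Φ t x) = fun _ => x := funext (hL hx)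
  rw [h2]
  exact tendsto_const_nhds

theorem aux_surj (Φ : Flow ℝ M) (hconv : allOrbitsConverge Φ) (A : Set M)
    (hA : IsAttractor (fun t x => Φ t x) A) :
    IsSmaleLowerSet Φ (A ∩ fixedPoints Φ) ∧ A = auxA Φ (A ∩ fixedPoints Φ) := by
  obtain ⟨hc, hi, U, hAU, hU, hAeq⟩ := hA
  have hcl := hc.isClosed
  have hinv : ∀ x ∈ A, ∀ t : ℝ, Φ t x ∈ A := fun x hx t => by
    rw [← hi t]; exact ⟨x, hx, rfl⟩
  have hin : ∀ p ∈ A, ∀ x, Tendsto (fun t : ℝ => Φ t x) atBot (𝓝 p) → x ∈ A := by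
    intro p hp x hx
    rw [hAeq]
    simp only [mem_iInter, mem_Ici]
    intro t ht
    have e : ∀ᶠ s in atBot, Φ s x ∈ U := hx (mem_interior_iff_mem_nhds.1 (hAU hp))
    obtain ⟨b, hb⟩ := eventually_atBot.1 e
    refine ⟨Φ (-t) x, ?_, aux_cancel_neg Φ t x⟩
    have h1 := hb (min b (-t - 1)) (min_le_left _ _)
    have h2 := min_le_right b (-t - 1)
    have h3 := hU (-t - min b (-t - 1)) (by linarith) ⟨_, subset_closure h1, rfl⟩
    simp only [← Φ.map_add, sub_add_cancel] at h3
    exact interior_subset h3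
  refine ⟨⟨inter_subset_right, ?_⟩, ?_⟩
  · intro y hy x hxf hxy
    refine ⟨?_, hxf⟩
    induction hxy using Relation.ReflTransGen.head_induction_on with
    | refl => exact hy.1
    | head h _ ih =>
      obtain ⟨-, h2, z, hz1, hz2⟩ := h
      rw [aux_mem_wMinus] at hz1
      rw [aux_mem_wPlus] at hz2
      exact hcl.mem_of_tendsto hz2 (Eventually.of_forall (hinv z (hin _ (ih h2) z hz1)))
  · ext x
    rw [aux_mem_A]
    constructor
    · intro hx
      obtain ⟨p, hp⟩ := (hconv x).2
      exact ⟨p, ⟨hcl.mem_of_tendsto hp (Eventually.of_forall (hinv x hx)), aux_fix_bot Φ hp⟩, hp⟩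
    · rintro ⟨p, hp, h⟩
      exact hin p hp.1 x h

end Helpers


/-- Suppose every flow line has a sink and a source, the fixed-point
set is finite, and the Smale order is antisymmetric.  Then `L ↦ A_L = ⋃_{x ∈ L} W⁻(x)`
is a bijection from the lower sets of `(M_fix, ≼)` onto the attractors of `Φ`, and a
lattice isomorphism: it maps unions to unions and intersections to intersections; in
particular every attractor equals `A_L` for a unique lower set `L`. -/
theorem lowerSets_equiv_attractors
    {M : Type*} [MetricSpace M] [CompactSpace M] (Φ : Flow ℝ M)
    (hconv : allOrbitsConverge Φ)
    (hfin : (fixedPoints Φ).Finite)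
    (hanti : ∀ x y : M, smaleLe Φ x y → smaleLe Φ y x → x = y) :
    (∀ L : Set M, IsSmaleLowerSet Φ L →
      IsAttractor (fun t x => Φ t x) (⋃ x ∈ L, wMinus Φ {x})) ∧
    (∀ A : Set M, IsAttractor (fun t x => Φ t x) A →
      ∃! L : Set M, IsSmaleLowerSet Φ L ∧ A = ⋃ x ∈ L, wMinus Φ {x}) ∧
    (∀ L₁ L₂ : Set M, IsSmaleLowerSet Φ L₁ → IsSmaleLowerSet Φ L₂ →
      (⋃ x ∈ L₁ ∪ L₂, wMinus Φ {x})
          = (⋃ x ∈ L₁, wMinus Φ {x}) ∪ ⋃ x ∈ L₂, wMinus Φ {x} ∧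
      (⋃ x ∈ L₁ ∩ L₂, wMinus Φ {x})
          = (⋃ x ∈ L₁, wMinus Φ {x}) ∩ ⋃ x ∈ L₂, wMinus Φ {x}) := by
  refine ⟨fun L hL => aux_attractor Φ hconv hfin L hL, fun A hA => ?_, fun L₁ L₂ _ _ => ⟨?_, ?_⟩⟩
  · obtain ⟨h1, h2⟩ := aux_surj Φ hconv A hA
    refine ⟨A ∩ fixedPoints Φ, ⟨h1, h2⟩, ?_⟩
    rintro L ⟨hL, hLA⟩
    have h3 := aux_unique Φ L hL.1
    have h4 : A = auxA Φ L := hLA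
    rw [← h4] at h3
    exact h3
  · exact Set.biUnion_union L₁ L₂ _
  · change auxA Φ (L₁ ∩ L₂) = auxA Φ L₁ ∩ auxA Φ L₂
    ext x
    simp only [Set.mem_inter_iff, aux_mem_A]
    constructor
    · rintro ⟨p, ⟨h1, h2⟩, h⟩
      exact ⟨⟨p, h1, h⟩, ⟨p, h2, h⟩⟩
    · rintro ⟨⟨p, h1, h⟩, ⟨q, h2, h'⟩⟩
      have := tendsto_nhds_unique h h'
      subst this
      exact ⟨p, ⟨h1, h2⟩, h⟩
end
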